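/- (Validity of the CORELS lower bound for pruning.) Let S be a dataset of N examples, let dp = ((t_1,y_1),…,(t_k,y_k)) be a prefix of rules, and define the lower bound LB(dp, S) = (1/N)·Σ_{n : x_n is captured by dp} 1[ŷ(x_n) ≠ y_n], where ŷ(x_n) = y_{i*} for the least index i* ≤ k with t_{i*}(x_n) = 1. Then for every rule list d = dp ∘ d' obtained by extending dp with a suffix d' whose last term is the constant-true term, the empirical risk satisfies L(h_d | S) ≥ LB(dp, S). Consequently, if LB(dp, S) > L* for a threshold L* ∈ [0,1], then no extension d of dp satisfies L(h_d | S) ≤ L*. -/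

import Mathlib

/-- Input domain `X = {0,1}^J`. -/
abbrev Input (J : ℕ) := Fin J → Bool

/-- A term over `X = {0,1}^J` is a function `t : X → {0,1}`. -/
abbrev Term (J : ℕ) := Input J → Bool

/-- A rule is a pair `(t, y)` of a term and a label. -/
abbrev Rule (J : ℕ) := Term J × Bool

/-- The classifier `h_d` of a rule list `d`: it predicts `y_i` for the least
index `i` with `t_i(x) = 1`. -/
def predict {J : ℕ} : List (Rule J) → Input J → Bool
  | [], _ => false
  | (t, y) :: rest, x => if t x then y else predict rest x

/-- `x` is captured by the prefix `dp` if `t_i(x) = 1` for some rule of `dp`. -/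
def captured {J : ℕ} (dp : List (Rule J)) (x : Input J) : Bool :=
  dp.any fun r => r.1 x

/-- Empirical risk `L(h | S)` on a dataset of `N` examples (0-1 loss). -/
noncomputable def risk {J N : ℕ} (S : Fin N → Input J × Bool) (h : Input J → Bool) : ℝ :=
  (∑ n, if h (S n).1 ≠ (S n).2 then (1 : ℝ) else 0) / N

/-- The CORELS lower bound `LB(dp, S)`: the fraction of examples that are
captured by the prefix `dp` and misclassified by it (for a captured input,
`predict dp` is exactly the prediction `y_{i*}` of the least firing rule). -/
noncomputable def LB {J N : ℕ} (S : Fin N → Input J × Bool) (dp : List (Rule J)) : ℝ :=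
  (∑ n, if captured dp (S n).1 = true ∧ predict dp (S n).1 ≠ (S n).2
        then (1 : ℝ) else 0) / N

theorem predict_append {J : ℕ} (dp d' : List (Rule J)) (x : Input J) :
    predict (dp ++ d') x = if captured dp x then predict dp x else predict d' x := by
  induction dp with
  | nil => simp [captured]
  | cons r dp ih => by_cases hr : r.1 x <;> simp_all [predict, captured]

theorem eqOn_predict_append {J : ℕ} (dp d' : List (Rule J)) :
    Set.EqOn (predict (dp ++ d')) (predict dp) {x | captured dp x} := fun x hx =>
  (predict_append dp d' x).trans (if_pos hx)

theorem corels_lower_bound_valid_general {J N : ℕ} (hN : 1 ≤ N)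
    (S : Fin N → Input J × Bool) {dp : List (Rule J)} {h : Input J → Bool}
    (hdp : Set.EqOn h (predict dp) {x | captured dp x}) :
    LB S dp ≤ risk S h := by
  have herrors : ({n | captured dp (S n).1 ∧ predict dp (S n).1 ≠ (S n).2} : Finset (Fin N)) ⊆
      ({n | h (S n).1 ≠ (S n).2} : Finset (Fin N)) :=
    Finset.monotone_filter_right _ fun n _ ⟨hcaptured, herror⟩ => by rwa [hdp hcaptured]
  have hNpos : (0 : ℝ) < N := Nat.cast_pos.mpr hN
  rw [LB, risk, div_le_div_iff_of_pos_right hNpos, Finset.sum_boole, Finset.sum_boole]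
  exact Nat.cast_le.mpr (Finset.card_le_card herrors)

/-- validity of the CORELS lower bound: every rule list
`d = dp ∘ d'` extending the prefix `dp` by a suffix `d'` whose last term is
the constant-true term satisfies `L(h_d | S) ≥ LB(dp, S)`; consequently if
`LB(dp, S) > L*` for a threshold `L* ∈ [0,1]`, no extension `d` of `dp`
satisfies `L(h_d | S) ≤ L*`. -/
theorem corels_lower_bound_valid {J N : ℕ} (hN : 1 ≤ N)
    (S : Fin N → Input J × Bool) (dp : List (Rule J)) :
    (∀ (d' : List (Rule J)) (hne : d' ≠ []),
        (d'.getLast hne).1 = (fun _ => true) →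
        LB S dp ≤ risk S (predict (dp ++ d'))) ∧
    (∀ Lstar : ℝ, Lstar ∈ Set.Icc (0 : ℝ) 1 → LB S dp > Lstar →
      ∀ (d' : List (Rule J)) (hne : d' ≠ []),
        (d'.getLast hne).1 = (fun _ => true) →
        ¬ risk S (predict (dp ++ d')) ≤ Lstar) := by
  have hLB (d' : List (Rule J)) : LB S dp ≤ risk S (predict (dp ++ d')) :=
    corels_lower_bound_valid_general hN S (eqOn_predict_append dp d')
  exact ⟨fun d' _ _ => hLB d', fun _ _ hL d' _ _ => (hL.trans_le (hLB d')).not_ge⟩
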